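/- arXiv:2406.17184 — 4 statements merged into one kernel-verified Lean document; each statement's English description precedes it below -/
import Mathlib

section
/- The bump function B is infinitely differentiable on ℝ, and for every integer m ≥ 1, all real numbers a < b, and all x ∈ ℝ: B_{[a,b]}(a + (b−a)/3) − B_{[a,b]}(x) ≤ (L_m/(b−a)^m)·|a + (b−a)/3 − x|^m. -/
open Set MeasureTheory

/-- The basic mollifier `u₀(x) = exp(−1/(x(1/3 − x)))` on `(0, 1/3)`, `0` elsewhere. -/
noncomputable def u0 (x : ℝ) : ℝ :=
  if x ∈ Set.Ioo (0 : ℝ) (1 / 3) then Real.exp (-(1 / (x * (1 / 3 - x)))) else 0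

/-- The normalized primitive `u(x) = (∫₀^{1/3} u₀)⁻¹ · ∫_{−∞}^x u₀`. -/
noncomputable def uFn (x : ℝ) : ℝ :=
  (∫ t in (0 : ℝ)..(1 / 3), u0 t)⁻¹ * ∫ t in Set.Iic x, u0 t

/-- `L_m = sup_x |u^{(m)}(x)|/m!`. -/
noncomputable def Lm (m : ℕ) : ℝ := ⨆ x : ℝ, |iteratedDeriv m uFn x| / (m.factorial : ℝ)

/-- The bump function `B`. -/
noncomputable def bump (x : ℝ) : ℝ :=
  if x < 0 then 0
  else if x ≤ 1 / 3 then uFn x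
  else if x < 2 / 3 then 1
  else if x ≤ 1 then uFn (1 - x)
  else 0

/-- The bump function rescaled to the interval `[a, b]`. -/
noncomputable def bumpOn (a b x : ℝ) : ℝ := bump ((x - a) / (b - a))

lemma u0_eq : u0 = fun x => expNegInvGlue (x * (1 / 3 - x)) := by
  funext x
  unfold u0
  split_ifs with h
  · have h1 : 0 < x * (1 / 3 - x) := mul_pos h.1 (by linarith [h.2])
    rw [expNegInvGlue, if_neg (not_le.2 h1), one_div (x * (1 / 3 - x))]
  · symm
    apply expNegInvGlue.zero_of_nonpos
    by_contra hc
    push Not at hc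
    apply h
    constructor <;> nlinarith

lemma u0_smooth : ContDiff ℝ (⊤ : ℕ∞) u0 := by
  rw [u0_eq]
  exact expNegInvGlue.contDiff.comp (by fun_prop)

lemma u0_cont : Continuous u0 := u0_smooth.continuous

lemma u0_nonneg (x : ℝ) : 0 ≤ u0 x := by
  rw [u0_eq]; exact expNegInvGlue.nonneg _

lemma u0_left {x : ℝ} (h : x ≤ 0) : u0 x = 0 := by
  simp [u0, h]

lemma u0_right {x : ℝ} (h : 1 / 3 ≤ x) : u0 x = 0 := by
  unfold u0
  rw [if_neg]
  exact fun hx => absurd hx.2 (not_lt.2 h)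

lemma u0_integrable : Integrable u0 := by
  apply u0_cont.integrable_of_hasCompactSupport
  apply HasCompactSupport.intro (isCompact_Icc (a := (0:ℝ)) (b := 1/3))
  intro x hx
  unfold u0
  rw [if_neg]
  exact fun h => hx ⟨h.1.le, h.2.le⟩

lemma u0_pos : 0 < ∫ t in (0 : ℝ)..(1 / 3), u0 t := by
  apply intervalIntegral.intervalIntegral_pos_of_pos_on (u0_cont.intervalIntegrable _ _) _ (by norm_num)
  intro x hx
  unfold u0
  rw [if_pos hx]
  positivity

lemma uFn_eq (x : ℝ) : uFn x =
    (∫ t in (0 : ℝ)..(1 / 3), u0 t)⁻¹ * ∫ t in (0:ℝ)..x, u0 t := by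
  unfold uFn
  rw [← intervalIntegral.integral_Iic_sub_Iic (a := (0:ℝ)) (b := x) u0_integrable.integrableOn u0_integrable.integrableOn,
    setIntegral_eq_zero_of_forall_eq_zero (t := Iic (0:ℝ)) (fun x hx => u0_left hx), sub_zero]

lemma uFn_left {x : ℝ} (h : x ≤ 0) : uFn x = 0 := by
  unfold uFn
  rw [setIntegral_eq_zero_of_forall_eq_zero (t := Iic x) (fun y hy => u0_left (le_trans hy h)),
    mul_zero]

lemma uFn_symm (x : ℝ) : 1 - uFn x = uFn (1 / 3 - x) := by
  have hp := u0_pos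
  have h1 : ∫ t in (0:ℝ)..(1/3 - x), u0 t = ∫ t in x..(1/3), u0 t := by
    have := intervalIntegral.integral_comp_sub_left (a := x) (b := 1/3) u0 (1/3)
    rw [sub_self] at this
    rw [← this]
    congr 1
    funext t
    rw [u0_eq]
    simp only
    congr 1
    ring
  have h2 := intervalIntegral.integral_add_adjacent_intervals
    (u0_cont.intervalIntegrable (μ := volume) 0 x) (u0_cont.intervalIntegrable x (1/3))
  rw [uFn_eq, uFn_eq, h1]
  field_simp
  linarith

lemma uFn_right {x : ℝ} (h : 1 / 3 ≤ x) : uFn x = 1 := by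
  have := uFn_symm x
  rw [uFn_left (by linarith : 1 / 3 - x ≤ 0)] at this
  linarith

lemma uFn_hasDeriv (x : ℝ) : HasDerivAt uFn
    ((∫ t in (0 : ℝ)..(1 / 3), u0 t)⁻¹ * u0 x) x := by
  rw [show uFn = _ from funext uFn_eq]
  exact (intervalIntegral.integral_hasDerivAt_right (u0_cont.intervalIntegrable _ _)
    (u0_cont.stronglyMeasurableAtFilter _ _) u0_cont.continuousAt).const_mul _

lemma uFn_smooth : ContDiff ℝ (⊤ : ℕ∞) uFn := by
  rw [contDiff_infty_iff_deriv]
  refine ⟨fun x => (uFn_hasDeriv x).differentiableAt, ?_⟩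
  rw [show deriv uFn = _ from funext fun x => (uFn_hasDeriv x).deriv]
  exact contDiff_const.mul u0_smooth

lemma bump_eq : bump = fun x => uFn x * uFn (1 - x) := by
  funext x
  unfold bump
  split_ifs with h1 h2 h3 h4
  · rw [uFn_left h1.le, zero_mul]
  · rw [uFn_right (by linarith : 1 / 3 ≤ 1 - x), mul_one]
  · rw [uFn_right (by linarith : 1 / 3 ≤ 1 - x), uFn_right (by linarith : 1 / 3 ≤ x), mul_one]
  · rw [uFn_right (by linarith : 1 / 3 ≤ x), one_mul]
  · rw [uFn_left (by linarith : 1 - x ≤ 0), mul_zero]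

lemma iter_cont (m : ℕ) : Continuous (iteratedDeriv m uFn) :=
  uFn_smooth.continuous_iteratedDeriv m (by exact_mod_cast le_top)

lemma iter_left (m : ℕ) {x : ℝ} (h : x < 0) : iteratedDeriv m uFn x = 0 := by
  have : uFn =ᶠ[nhds x] fun _ => (0:ℝ) := by
    filter_upwards [Iio_mem_nhds h] with y hy using uFn_left (le_of_lt hy)
  rw [this.iteratedDeriv_eq m]
  simp [iteratedDeriv_const]

lemma iter_right (m : ℕ) (hm : 1 ≤ m) {x : ℝ} (h : 1 / 3 < x) : iteratedDeriv m uFn x = 0 := by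
  have : uFn =ᶠ[nhds x] fun _ => (1:ℝ) := by
    filter_upwards [Ioi_mem_nhds h] with y hy using uFn_right (le_of_lt hy)
  rw [this.iteratedDeriv_eq m]
  simp [iteratedDeriv_const]
  omega

lemma iter_zero (m : ℕ) : iteratedDeriv m uFn 0 = 0 := by
  have hcl : IsClosed {x | iteratedDeriv m uFn x = 0} := isClosed_eq (iter_cont m) continuous_const
  have hs : closure (Iio (0:ℝ)) ⊆ {x | iteratedDeriv m uFn x = 0} :=
    closure_minimal (fun x hx => iter_left m hx) hcl
  rw [closure_Iio] at hs
  exact hs (mem_Iic.2 le_rfl)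

lemma iter_bdd (m : ℕ) (hm : 1 ≤ m) :
    BddAbove (range fun x : ℝ => |iteratedDeriv m uFn x| / (m.factorial : ℝ)) := by
  obtain ⟨C, hC⟩ := (isCompact_Icc (a := (0:ℝ)) (b := 1/3)).exists_bound_of_continuousOn
    (iter_cont m).continuousOn
  have hC0 : 0 ≤ C := (norm_nonneg _).trans (hC 0 ⟨le_rfl, by norm_num⟩)
  refine ⟨C / m.factorial, ?_⟩
  rintro _ ⟨x, rfl⟩
  simp only
  gcongr
  rcases lt_or_ge x 0 with h | h
  · rw [iter_left m h]; simpa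
  rcases lt_or_ge (1/3) x with h' | h'
  · rw [iter_right m hm h']; simpa
  exact hC x ⟨h, h'⟩

lemma Lm_nonneg (m : ℕ) : 0 ≤ Lm m := Real.iSup_nonneg fun x => by positivity

lemma uFn_le (m : ℕ) (hm : 1 ≤ m) {w : ℝ} (hw : 0 < w) : uFn w ≤ Lm m * w ^ m := by
  obtain ⟨n, rfl⟩ : ∃ n, m = n + 1 := ⟨m - 1, by omega⟩
  obtain ⟨c, hc, h⟩ := taylor_mean_remainder_lagrange_iteratedDeriv (f := uFn) (n := n) hw.ne
    ((uFn_smooth.of_le (by exact_mod_cast le_top)).contDiffOn)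
  have hT : taylorWithinEval uFn n (uIcc 0 w) 0 w = 0 := by
    rw [taylor_within_apply]
    apply Finset.sum_eq_zero
    intro k _
    rw [uIcc_of_le hw.le, iteratedDerivWithin_eq_iteratedDeriv (uniqueDiffOn_Icc hw)
      ((uFn_smooth.of_le (by exact_mod_cast le_top)).contDiffAt) ⟨le_rfl, hw.le⟩, iter_zero,
      smul_zero]
  rw [hT, sub_zero, sub_zero] at h
  rw [h]
  have hL : |iteratedDeriv (n+1) uFn c| / ((n+1).factorial : ℝ) ≤ Lm (n+1) :=
    le_ciSup (iter_bdd (n+1) hm) c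
  calc iteratedDeriv (n+1) uFn c * w ^ (n+1) / ((n+1).factorial : ℝ)
      ≤ |iteratedDeriv (n+1) uFn c| * w ^ (n+1) / ((n+1).factorial : ℝ) := by
        gcongr
        exact le_abs_self _
    _ = |iteratedDeriv (n+1) uFn c| / ((n+1).factorial : ℝ) * w ^ (n+1) := by ring
    _ ≤ _ := by gcongr

lemma one_sub_le (m : ℕ) (hm : 1 ≤ m) (z : ℝ) : 1 - uFn z ≤ Lm m * |1 / 3 - z| ^ m := by
  have := Lm_nonneg m
  rw [uFn_symm]
  rcases le_or_gt (1/3 - z) 0 with h | h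
  · rw [uFn_left h]; positivity
  · rw [abs_of_pos h]; exact uFn_le m hm h

lemma bump_bound (m : ℕ) (hm : 1 ≤ m) (y : ℝ) : 1 - bump y ≤ Lm m * |1 / 3 - y| ^ m := by
  have hL := Lm_nonneg m
  rw [bump_eq]
  simp only
  rcases le_or_gt y (1/2) with h | h
  · rw [uFn_right (by linarith : 1 / 3 ≤ 1 - y), mul_one]
    exact one_sub_le m hm y
  · rw [uFn_right (by linarith : 1 / 3 ≤ y), one_mul]
    refine (one_sub_le m hm (1 - y)).trans ?_
    have h3 : |1 / 3 - (1 - y)| ≤ |1 / 3 - y| := by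
      rw [abs_of_neg (by linarith : 1 / 3 - y < 0), abs_le]
      constructor <;> linarith
    exact mul_le_mul_of_nonneg_left (pow_le_pow_left₀ (abs_nonneg _) h3 m) hL

/-- The bump function `B` is infinitely differentiable, and for every `m ≥ 1`,
every interval `[a,b]` and every `x`,
`B_{[a,b]}(a + (b−a)/3) − B_{[a,b]}(x) ≤ (L_m/(b−a)^m)·|a + (b−a)/3 − x|^m`. -/
theorem bump_smooth_and_peak_bound :
    ContDiff ℝ (⊤ : ℕ∞) bump ∧
    ∀ m : ℕ, 1 ≤ m → ∀ a b : ℝ, a < b → ∀ x : ℝ,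
      bumpOn a b (a + (b - a) / 3) - bumpOn a b x ≤
        Lm m / (b - a) ^ m * |a + (b - a) / 3 - x| ^ m := by
  refine ⟨?_, ?_⟩
  · rw [bump_eq]
    exact uFn_smooth.mul (uFn_smooth.comp (contDiff_const.sub contDiff_id))
  · intro m hm a b hab x
    have hd : 0 < b - a := sub_pos.2 hab
    unfold bumpOn
    have h1 : (a + (b - a) / 3 - a) / (b - a) = 1 / 3 := by field_simp; ring
    have h2 : bump (1 / 3) = 1 := by
      rw [bump_eq]
      simp only
      rw [uFn_right le_rfl, uFn_right (by norm_num), mul_one]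
    rw [h1, h2]
    refine (bump_bound m hm _).trans (le_of_eq ?_)
    have h3 : 1 / 3 - (x - a) / (b - a) = (a + (b - a) / 3 - x) / (b - a) := by
      field_simp; ring
    rw [h3, abs_div, abs_of_pos hd, div_pow]
    ring
end

section
/- Let B > 0 and B_ε > 0 with B_ε ≤ B/2. Let X be a random variable taking values in a measurable space 𝒳, let v* : 𝒳 → ℝ be measurable with B_ε ≤ v*(x) ≤ B − B_ε for all x ∈ 𝒳, let ε be a real random variable with E[ε] = 0 and |ε| ≤ B_ε almost surely, independent of X, and let P be uniformly distributed on [0, B] and independent of (X, ε). Define Y = 1{P ≤ v*(X) + ε}. Then E[B·Y | X] = v*(X) almost surely. -/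
open MeasureTheory ProbabilityTheory
open scoped ENNReal

/-- Posting a uniform random price `P ∼ Unif(0,B)` yields unbiased feedback:
if the valuation is `v*(X) + ε` with `E[ε] = 0`, `|ε| ≤ B_ε ≤ B/2`,
`B_ε ≤ v*(x) ≤ B − B_ε`, `ε ⊥ X`, and `P ⊥ (X, ε)`, then for `Y = 1{P ≤ v*(X) + ε}`
we have `E[B·Y | X] = v*(X)` almost surely. -/
theorem uniform_price_unbiased_feedback
    {Ω 𝒳 : Type*} [MeasurableSpace Ω] [MeasurableSpace 𝒳]
    (μ : Measure Ω) [IsProbabilityMeasure μ]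
    (B Beps : ℝ) (hB : 0 < B) (hBeps : 0 < Beps) (hBeps2 : Beps ≤ B / 2)
    (X : Ω → 𝒳) (hX : Measurable X)
    (vstar : 𝒳 → ℝ) (hvstar : Measurable vstar)
    (hvbound : ∀ x : 𝒳, Beps ≤ vstar x ∧ vstar x ≤ B - Beps)
    (ε : Ω → ℝ) (hε : Measurable ε)
    (hεmean : ∫ ω, ε ω ∂μ = 0)
    (hεbdd : ∀ᵐ ω ∂μ, |ε ω| ≤ Beps)
    (hεX : IndepFun ε X μ)
    (P : Ω → ℝ) (hP : Measurable P)
    (hPunif : μ.map P = (ENNReal.ofReal B)⁻¹ • (volume.restrict (Set.Icc (0 : ℝ) B)))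
    (hPindep : IndepFun P (fun ω => (X ω, ε ω)) μ)
    (Y : Ω → ℝ) (hY : Y = fun ω => if P ω ≤ vstar (X ω) + ε ω then (1 : ℝ) else 0) :
    μ[(fun ω => B * Y ω) | MeasurableSpace.comap X inferInstance] =ᵐ[μ]
      fun ω => vstar (X ω) := by
  classical
  set F : 𝒳 × ℝ → ℝ → ℝ := fun z p => if p ≤ vstar z.1 + z.2 then (1 : ℝ) else 0 with hF
  have hFm : Measurable (Function.uncurry F) := by
    refine Measurable.ite ?_ measurable_const measurable_const
    exact measurableSet_le measurable_snd (by fun_prop)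
  set Z : Ω → 𝒳 × ℝ := fun ω => (X ω, ε ω) with hZ
  have hZm : Measurable Z := hX.prodMk hε
  have hYm : Measurable Y := by
    rw [hY]
    exact hFm.comp (hZm.prodMk hP)
  have hYb : ∀ ω, ‖B * Y ω‖ ≤ B := by
    intro ω
    rw [hY]
    dsimp only
    split_ifs <;> simp [abs_of_pos hB, hB.le]
  have hYi : Integrable (fun ω => B * Y ω) μ :=
    Integrable.of_bound (by fun_prop) B (Filter.Eventually.of_forall hYb)
  have hvi : Integrable (fun ω => vstar (X ω)) μ := by
    refine Integrable.of_bound (hvstar.comp hX).aestronglyMeasurable B (Filter.Eventually.of_forall fun ω => ?_)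
    have := hvbound (X ω)
    rw [Real.norm_eq_abs, abs_le]
    constructor <;> linarith
  have hεi : Integrable ε μ := Integrable.of_bound (by fun_prop) Beps hεbdd
  have hπ : IsProbabilityMeasure (μ.map P) := Measure.isProbabilityMeasure_map hP.aemeasurable
  have hν : IsProbabilityMeasure (μ.map Z) := Measure.isProbabilityMeasure_map hZm.aemeasurable
  have hinner : ∀ t : ℝ, 0 ≤ t → t ≤ B →
      ∫ p, (if p ≤ t then (1 : ℝ) else 0) ∂(μ.map P) = t / B := by
    intro t h0 h1
    have e : (fun p : ℝ => if p ≤ t then (1 : ℝ) else 0) = (Set.Iic t).indicator 1 := by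
      ext p; simp [Set.indicator]
    rw [e, integral_indicator_one measurableSet_Iic, hPunif]
    have e2 : Set.Iic t ∩ Set.Icc 0 B = Set.Icc 0 t := by
      ext p
      simp only [Set.mem_inter_iff, Set.mem_Iic, Set.mem_Icc]
      constructor
      · rintro ⟨a, b, c⟩; exact ⟨b, a⟩
      · rintro ⟨a, b⟩; exact ⟨b, a, b.trans h1⟩
    rw [measureReal_def, Measure.smul_apply, Measure.restrict_apply measurableSet_Iic, e2,
      Real.volume_Icc, smul_eq_mul, ENNReal.toReal_mul, ENNReal.toReal_inv,
      ENNReal.toReal_ofReal hB.le, ENNReal.toReal_ofReal (by linarith)]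
    rw [sub_zero]
    ring
  have hm : MeasurableSpace.comap X inferInstance ≤ (inferInstance : MeasurableSpace Ω) :=
    hX.comap_le
  symm
  refine ae_eq_condExp_of_forall_setIntegral_eq hX.comap_le hYi (fun _ _ _ => hvi.integrableOn)
    ?_ ?_
  · rintro _ ⟨S, hS, rfl⟩ -
    have hA : MeasurableSet (X ⁻¹' S) := hX hS
    set g : 𝒳 → ℝ := S.indicator 1 with hg
    have hgm : Measurable g := measurable_one.indicator hS
    have hgb : ∀ x, |g x| ≤ 1 := by
      intro x
      by_cases h : x ∈ S <;> simp [hg, h]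
    have hconv : ∀ f : Ω → ℝ, ∫ ω in X ⁻¹' S, f ω ∂μ = ∫ ω, g (X ω) * f ω ∂μ := by
      intro f
      rw [← integral_indicator hA]
      congr 1
      ext ω
      by_cases h : X ω ∈ S <;> simp [hg, h]
    rw [hconv, hconv]
    set G : (𝒳 × ℝ) × ℝ → ℝ := fun q => g q.1.1 * (B * F q.1 q.2) with hG
    have hGm : Measurable G :=
      (hgm.comp (measurable_fst.comp measurable_fst)).mul (hFm.const_mul B)
    have hGb : ∀ q, ‖G q‖ ≤ B := by
      intro q
      have h1 := hgb q.1.1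
      have h2 : |B * F q.1 q.2| ≤ B := by
        simp only [hF]
        split_ifs <;> simp [abs_of_pos hB, hB.le]
      rw [Real.norm_eq_abs, hG, abs_mul]
      calc _ ≤ 1 * B := mul_le_mul h1 h2 (abs_nonneg _) zero_le_one
        _ = B := one_mul B
    have hprod : μ.map (fun ω => (Z ω, P ω)) = (μ.map Z).prod (μ.map P) :=
      (indepFun_iff_map_prod_eq_prod_map_map hZm.aemeasurable hP.aemeasurable).1 hPindep.symm
    have hL : ∫ ω, g (X ω) * (B * Y ω) ∂μ = ∫ ω, g (X ω) * (vstar (X ω) + ε ω) ∂μ := by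
      calc ∫ ω, g (X ω) * (B * Y ω) ∂μ = ∫ ω, G (Z ω, P ω) ∂μ := by rw [hY]
        _ = ∫ q, G q ∂(μ.map (fun ω => (Z ω, P ω))) :=
          (integral_map (hZm.prodMk hP).aemeasurable hGm.aestronglyMeasurable).symm
        _ = ∫ z, ∫ p, G (z, p) ∂(μ.map P) ∂(μ.map Z) := by
          rw [hprod]
          exact integral_prod _ (Integrable.of_bound hGm.aestronglyMeasurable B
            (Filter.Eventually.of_forall hGb))
        _ = ∫ ω, ∫ p, G (Z ω, p) ∂(μ.map P) ∂μ :=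
          integral_map hZm.aemeasurable
            (hGm.stronglyMeasurable.integral_prod_right').aestronglyMeasurable
        _ = _ := by
          refine integral_congr_ae ?_
          filter_upwards [hεbdd] with ω hω
          have hb := hvbound (X ω)
          rw [abs_le] at hω
          simp only [hG, hF, hZ]
          rw [integral_const_mul, integral_const_mul, hinner _ (by linarith) (by linarith)]
          field_simp
    have hgX : Measurable (fun ω => g (X ω)) := hgm.comp hX
    have hz : ∫ ω, g (X ω) * ε ω ∂μ = 0 := by
      have hi : IndepFun (fun ω => g (X ω)) ε μ := hεX.symm.comp hgm measurable_id
      have := hi.integral_fun_mul_eq_mul_integral hgX.aestronglyMeasurable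
        hε.aestronglyMeasurable
      rw [this, hεmean, mul_zero]
    have hb1 : ∀ᵐ ω ∂μ, ‖g (X ω)‖ ≤ 1 := Filter.Eventually.of_forall fun ω => hgb _
    rw [hL]
    simp only [mul_add]
    rw [integral_add (hvi.bdd_mul hgX.aestronglyMeasurable hb1)
      (hεi.bdd_mul hgX.aestronglyMeasurable hb1), hz, add_zero]
  · exact (hvstar.comp (comap_measurable X)).aestronglyMeasurable
end

section
/- Let F : ℝ → [0, 1] be nondecreasing, let B > 0, let v ∈ ℝ, and let v̂ ∈ ℝ with |v̂| ≤ M for some M > 0. Partition the interval [−M, B + M] into N ≥ 1 equal-length subintervals and let m₁ < ⋯ < m_N be their midpoints; let the candidate prices be p_j = m_j + v̂ for those j with p_j ∈ (0, B), and assume this candidate set is nonempty. Then sup_{p ∈ [0, B]} p·(1 − F(p − v)) − max_{j : p_j ∈ (0, B)} p_j·(1 − F(p_j − v)) ≤ (B + 2M)/N. In particular, if M ≤ B, the gap is at most 3B/N. -/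
open Set

/-- Discretization error of the price grid.  Partition `[−M, B+M]` into `N` equal-length
subintervals with midpoints `m j = −M + (j + 1/2)·(B+2M)/N`, and let the candidate prices be
`m j + v̂` for those `j` with `m j + v̂ ∈ (0, B)` (a nonempty collection).  Then the best
revenue over `[0,B]` exceeds the best revenue over the candidate prices by at most
`(B+2M)/N`; in particular, if `M ≤ B`, by at most `3B/N`. -/
theorem discretization_gap
    (F : ℝ → ℝ) (B M v vhat : ℝ) (N : ℕ)
    (hF_mono : Monotone F) (hF01 : ∀ x, F x ∈ Icc (0 : ℝ) 1)
    (hB : 0 < B) (hM : 0 < M) (hvhat : |vhat| ≤ M) (hN : 1 ≤ N)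
    (mid : Fin N → ℝ)
    (hmid : ∀ j : Fin N, mid j = -M + ((j : ℝ) + 1 / 2) * ((B + 2 * M) / N))
    (S : Finset (Fin N))
    (hS : S = Finset.univ.filter fun j => mid j + vhat ∈ Ioo (0 : ℝ) B)
    (hSne : S.Nonempty) :
    sSup ((fun p => p * (1 - F (p - v))) '' Icc (0 : ℝ) B) -
        S.sup' hSne (fun j => (mid j + vhat) * (1 - F (mid j + vhat - v))) ≤
      (B + 2 * M) / N ∧
    (M ≤ B →
      sSup ((fun p => p * (1 - F (p - v))) '' Icc (0 : ℝ) B) -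
          S.sup' hSne (fun j => (mid j + vhat) * (1 - F (mid j + vhat - v))) ≤
        3 * B / N) := by
  have hN0 : (0 : ℝ) < N := by exact_mod_cast hN
  have hmain : sSup ((fun p => p * (1 - F (p - v))) '' Icc (0 : ℝ) B) -
        S.sup' hSne (fun j => (mid j + vhat) * (1 - F (mid j + vhat - v))) ≤
      (B + 2 * M) / N := by
    set h : ℝ := (B + 2 * M) / N with hh
    have hpos : 0 < h := by positivity
    have hNh : N * h = B + 2 * M := by rw [hh]; field_simp
    have hv := abs_le.mp hvhat
    rw [sub_le_iff_le_add]
    apply csSup_le ((nonempty_Icc.mpr hB.le).image _)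
    rintro _ ⟨p, ⟨hp0, hpB⟩, rfl⟩
    show p * (1 - F (p - v)) ≤ _
    have hFp := hF01 (p - v)
    by_cases hph : p ≤ h
    · obtain ⟨j, hj⟩ := id hSne
      have h1 := Finset.le_sup' (fun j => (mid j + vhat) * (1 - F (mid j + vhat - v))) hj
      have hj2 : mid j + vhat ∈ Ioo (0 : ℝ) B := by
        rw [hS] at hj; exact (Finset.mem_filter.mp hj).2
      have h2 : 0 ≤ (mid j + vhat) * (1 - F (mid j + vhat - v)) :=
        mul_nonneg hj2.1.le (by linarith [(hF01 (mid j + vhat - v)).2])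
      have h3 : p * (1 - F (p - v)) ≤ h := by nlinarith [hFp.1, hFp.2]
      linarith
    · push Not at hph
      set x : ℝ := (p + M - vhat) / h - 1 / 2 with hx
      have hxh : x * h = p + M - vhat - h / 2 := by rw [hx]; field_simp
      have hx0 : 0 < x := by
        by_contra hc
        push Not at hc
        nlinarith
      have hxN : x ≤ N := by
        by_contra hc
        push Not at hc
        nlinarith
      obtain ⟨k, hk⟩ : ∃ k, ⌈x⌉₊ = k + 1 :=
        Nat.exists_eq_succ_of_ne_zero (Nat.ceil_pos.mpr hx0).ne'
      have hk1 : (k : ℝ) < x := Nat.lt_ceil.mp (by omega)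
      have hk2 : x ≤ k + 1 := by
        have := Nat.le_ceil x
        rw [hk] at this
        exact_mod_cast this
      have hkN : k < N := by exact_mod_cast hk1.trans_le hxN
      have hm : mid ⟨k, hkN⟩ = -M + ((k : ℝ) + 1 / 2) * h := hmid ⟨k, hkN⟩
      set q := mid ⟨k, hkN⟩ + vhat with hq
      have hq1 : q < p := by nlinarith
      have hq2 : p ≤ q + h := by nlinarith
      have hj : (⟨k, hkN⟩ : Fin N) ∈ S := by
        rw [hS]
        exact Finset.mem_filter.mpr ⟨Finset.mem_univ _, by linarith, by linarith⟩
      have h1 := Finset.le_sup' (fun j => (mid j + vhat) * (1 - F (mid j + vhat - v))) hj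
      simp only [← hq] at h1
      have hFq := hF01 (q - v)
      have hFm : F (q - v) ≤ F (p - v) := hF_mono (by linarith)
      have h4 : p * (1 - F (p - v)) ≤ (q + h) * (1 - F (p - v)) :=
        mul_le_mul_of_nonneg_right hq2 (by linarith [hFp.2])
      have h5 : (q + h) * (1 - F (p - v)) ≤ (q + h) * (1 - F (q - v)) :=
        mul_le_mul_of_nonneg_left (by linarith) (by linarith)
      have h6 : h * (1 - F (q - v)) ≤ h := by nlinarith [hFq.1]
      nlinarith
  refine ⟨hmain, fun hMB => hmain.trans ?_⟩
  exact div_le_div_of_nonneg_right (by linarith) hN0.le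
end

section
/- Let F : ℝ → [0, 1] be L-Lipschitz, let B > 0, and let v, v̂ ∈ ℝ. Let p* be a maximizer of p ↦ p·(1 − F(p − v)) over [0, B] and let p̂ be a maximizer of p ↦ p·(1 − F(p − v̂)) over [0, B]. Then p*·(1 − F(p* − v)) − p̂·(1 − F(p̂ − v)) ≤ 2·B·L·|v − v̂|. -/
open Set

/-- If `F : ℝ → [0,1]` is `L`-Lipschitz, `p*` maximizes `p ↦ p(1 − F(p − v))` on `[0,B]`
and `p̂` maximizes `p ↦ p(1 − F(p − v̂))` on `[0,B]`, then
`p*(1 − F(p* − v)) − p̂(1 − F(p̂ − v)) ≤ 2BL|v − v̂|`. -/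
theorem revenue_loss_of_misspecification
    (F : ℝ → ℝ) (L B v vhat pstar phat : ℝ)
    (hB : 0 < B)
    (hF01 : ∀ x, F x ∈ Icc (0 : ℝ) 1)
    (hLip : ∀ x y, |F x - F y| ≤ L * |x - y|)
    (hpstar_mem : pstar ∈ Icc (0 : ℝ) B)
    (hpstar : ∀ p ∈ Icc (0 : ℝ) B, p * (1 - F (p - v)) ≤ pstar * (1 - F (pstar - v)))
    (hphat_mem : phat ∈ Icc (0 : ℝ) B)
    (hphat : ∀ p ∈ Icc (0 : ℝ) B, p * (1 - F (p - vhat)) ≤ phat * (1 - F (phat - vhat))) :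
    pstar * (1 - F (pstar - v)) - phat * (1 - F (phat - v)) ≤ 2 * B * L * |v - vhat| := by
  have key : ∀ p ∈ Icc (0 : ℝ) B,
      |p * (F (p - vhat) - F (p - v))| ≤ B * (L * |v - vhat|) := by
    intro p hp
    have h := hLip (p - vhat) (p - v)
    have e : p - vhat - (p - v) = v - vhat := by ring
    rw [e] at h
    rw [abs_mul, abs_of_nonneg hp.1]
    exact mul_le_mul hp.2 h (abs_nonneg _) hB.le
  have h1 := (abs_le.mp (key pstar hpstar_mem)).2
  have h2 := (abs_le.mp (key phat hphat_mem)).1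
  have h3 := hphat pstar hpstar_mem
  linarith
end
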